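/- For odd N = 2n+1 the FRT–Clifford algebra Cl_{2n+1}(q,c) is semisimple and decomposes as the direct sum of two simple two-sided ideals I_+ ⊕ I_-, where I_± is generated by ρ_± = γ_1⋯γ_n(±c + γ_{n+1})γ_{n+2}⋯γ_N; moreover dim I_+ = dim I_- = 2^{2n}. -/

import Mathlib

noncomputable section

namespace FRT

/-- The "dual" index `i' = N+1-i` (0-indexed: `N-1-i`). -/
def dual {N : ℕ} (i : Fin N) : Fin N := ⟨N - 1 - i.val, by have := i.2; omega⟩

/-- Generators of the free algebra. -/
def gen {N : ℕ} (i : Fin N) : FreeAlgebra ℂ (Fin N) := FreeAlgebra.ι ℂ i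

/-- The sum `∑_{k<i} q^{2k-2i+2} γ_k γ_{k'}` appearing in the defining relations. -/
def pairSum (N : ℕ) (q : ℂ) (i : Fin N) : FreeAlgebra ℂ (Fin N) :=
  ∑ k ∈ Finset.Iio i, (q ^ (2 * (k.val : ℤ) - 2 * (i.val : ℤ) + 2)) • (gen k * gen (dual k))

/-- The defining relations of the FRT–Clifford algebra `Cl_N(q,c)`. -/
inductive Rel (N : ℕ) (q c : ℂ) : FreeAlgebra ℂ (Fin N) → FreeAlgebra ℂ (Fin N) → Prop
  | sq (i : Fin N) (h : 2 * i.val + 1 ≠ N) : Rel N q c (gen i * gen i) 0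
  | swap (i j : Fin N) (hlt : i < j) (h : i.val + j.val + 1 ≠ N) :
      Rel N q c (gen j * gen i) ((-(q ^ 2)) • (gen i * gen j))
  | pair (i : Fin N) (h : 2 * i.val + 1 < N) :
      Rel N q c (gen (dual i) * gen i)
        (-(gen i * gen (dual i)) + (q ^ 2 - q⁻¹ ^ 2) • pairSum N q i +
          algebraMap ℂ _ (c ^ 2 * q ^ ((N : ℤ) - 2 * (i.val : ℤ) - 1) * (q + q⁻¹)))
  | middle (i : Fin N) (h : 2 * i.val + 1 = N) :
      Rel N q c (gen i * gen i) ((q - q⁻¹) • pairSum N q i + algebraMap ℂ _ (c ^ 2))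

/-- The FRT–Clifford algebra `Cl_N(q,c)`. -/
abbrev Cl (N : ℕ) (q c : ℂ) := RingQuot (Rel N q c)

/-- The generators `γ_i` of `Cl_N(q,c)`. -/
def γ (N : ℕ) (q c : ℂ) (i : Fin N) : Cl N q c :=
  RingQuot.mkAlgHom ℂ (Rel N q c) (gen i)

/-- Ordered product `γ_1 γ_2 ⋯ γ_m` of the first `m` generators. -/
def prodFirst (N : ℕ) (q c : ℂ) (m : ℕ) : Cl N q c :=
  (((List.finRange N).take m).map (γ N q c)).prod

/-- Ordered product `γ_{m+1} γ_{m+2} ⋯ γ_N` (0-indexed: indices `m,…,N-1`). -/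
def prodFrom (N : ℕ) (q c : ℂ) (m : ℕ) : Cl N q c :=
  (((List.finRange N).drop m).map (γ N q c)).prod

/-- The ordered monomial `γ_1^{i_1} ⋯ γ_N^{i_N}` for `i ∈ {0,1}^N`. -/
def monoB (N : ℕ) (q c : ℂ) (f : Fin N → Bool) : Cl N q c :=
  ((List.finRange N).map (fun i => if f i then γ N q c i else 1)).prod

/-- The ordered monomial `γ_1^{i_1} ⋯ γ_n^{i_n}` for `i ∈ {0,1}^n`, `n ≤ N`. -/
def monoLow (N : ℕ) (q c : ℂ) {n : ℕ} (h : n ≤ N) (f : Fin n → Bool) : Cl N q c :=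
  ((List.finRange n).map (fun j => if f j then γ N q c (Fin.castLE h j) else 1)).prod

/-- `z` is homogeneous of `∂_i`-degree `0`: it is fixed by every algebra endomorphism
rescaling `γ_i` by `t` and `γ_{i'}` by `t⁻¹`. -/
def DegZeroAt (N : ℕ) (q c : ℂ) (i : ℕ) (z : Cl N q c) : Prop :=
  ∀ t : ℂ, t ≠ 0 → ∀ f : Cl N q c →ₐ[ℂ] Cl N q c,
    (∀ j : Fin N, f (γ N q c j) =
      (if j.val = i then t else if j.val + i + 1 = N then t⁻¹ else 1) • γ N q c j) →
    f z = z

/-- `ρ_η = γ_1⋯γ_n(ηc + γ_{n+1})γ_{n+2}⋯γ_N` in `Cl_{2n+1}(q,c)`. -/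
def rhoOdd (n : ℕ) (q c η : ℂ) : Cl (2 * n + 1) q c :=
  prodFirst (2 * n + 1) q c n *
    (algebraMap ℂ (Cl (2 * n + 1) q c) (η * c) + γ (2 * n + 1) q c ⟨n, by omega⟩) *
    prodFrom (2 * n + 1) q c (n + 1)

variable {A : Type*} [Ring A] [Algebra ℂ A]

/-- The element `c² + (q - q⁻¹) ∑_{k<m} q^{2-2n+2k} Γ_k Γ_{k'}`, where `k' = 2n - k`. -/
def partialSquare (n : ℕ) (q c : ℂ) (Γ : ℕ → A) (m : ℕ) : A :=
  (c ^ 2) • (1 : A) + ∑ k ∈ Finset.range m,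
    ((q - q⁻¹) * q ^ (2 - 2 * (n : ℤ) + 2 * (k : ℤ))) • (Γ k * Γ (2 * n - k))

/-- The scalar `(q + q⁻¹) q^{2n-2i}` relating the anticommutator of `Γ_i` and `Γ_{i'}` to
`partialSquare`. -/
def anticommScalar (n : ℕ) (q : ℂ) (i : ℕ) : ℂ := (q + q⁻¹) * q ^ (2 * (n : ℤ) - 2 * (i : ℤ))

/-- A family satisfying the defining relations of `Cl_{2n+1}(q,c)`, indexed by `0, …, 2n`. -/
structure IsCliffordFamily (n : ℕ) (q c : ℂ) (Γ : ℕ → A) : Prop where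
  sq : ∀ i ≤ 2 * n, i ≠ n → Γ i * Γ i = 0
  swap : ∀ i j, i < j → j ≤ 2 * n → i + j ≠ 2 * n → Γ j * Γ i = (-(q ^ 2)) • (Γ i * Γ j)
  pair : ∀ i < n, Γ (2 * n - i) * Γ i =
    -(Γ i * Γ (2 * n - i)) + anticommScalar n q i • partialSquare n q c Γ i
  middle : Γ n * Γ n = partialSquare n q c Γ n

lemma partialSquare_zero (n : ℕ) (q c : ℂ) (Γ : ℕ → A) :
    partialSquare n q c Γ 0 = (c ^ 2) • (1 : A) := by
  simp [partialSquare]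

lemma partialSquare_succ (n : ℕ) (q c : ℂ) (Γ : ℕ → A) (m : ℕ) :
    partialSquare n q c Γ (m + 1) = partialSquare n q c Γ m +
      ((q - q⁻¹) * q ^ (2 - 2 * (n : ℤ) + 2 * (m : ℤ))) • (Γ m * Γ (2 * n - m)) := by
  simp [partialSquare, Finset.sum_range_succ, add_assoc]

/-- The span of `1, Γ_k, Γ_{k'}, Γ_k Γ_{k'}`. -/
def pairSpan (n : ℕ) (Γ : ℕ → A) (k : ℕ) : Submodule ℂ A :=
  Submodule.span ℂ {1, Γ k, Γ (2 * n - k), Γ k * Γ (2 * n - k)}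

/-- The product of the first `m` subspaces `pairSpan`. -/
def pairSpanProd (n : ℕ) (Γ : ℕ → A) : ℕ → Submodule ℂ A
  | 0 => 1
  | m + 1 => pairSpanProd n Γ m * pairSpan n Γ m

lemma one_mem_pairSpan (n : ℕ) (Γ : ℕ → A) (k : ℕ) : 1 ∈ pairSpan n Γ k :=
  Submodule.subset_span (by simp)

lemma left_mem_pairSpan (n : ℕ) (Γ : ℕ → A) (k : ℕ) : Γ k ∈ pairSpan n Γ k :=
  Submodule.subset_span (by simp)

lemma right_mem_pairSpan (n : ℕ) (Γ : ℕ → A) (k : ℕ) : Γ (2 * n - k) ∈ pairSpan n Γ k :=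
  Submodule.subset_span (by simp)

lemma mul_mem_pairSpan (n : ℕ) (Γ : ℕ → A) (k : ℕ) :
    Γ k * Γ (2 * n - k) ∈ pairSpan n Γ k :=
  Submodule.subset_span (by simp)

lemma one_mem_pairSpanProd (n : ℕ) (Γ : ℕ → A) (m : ℕ) : 1 ∈ pairSpanProd n Γ m := by
  induction m with
  | zero => exact Submodule.one_le.mp le_rfl
  | succ m ih =>
    rw [← mul_one (1 : A)]
    exact Submodule.mul_mem_mul ih (one_mem_pairSpan n Γ m)

/-- A linear condition holds on `pairSpan` as soon as it holds on the four spanning elements. -/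
lemma pairSpan_induction {n k : ℕ} {Γ : ℕ → A} {p : A} (hp : p ∈ pairSpan n Γ k)
    {P : A → Prop} (h1 : P 1) (ha : P (Γ k)) (hb : P (Γ (2 * n - k)))
    (hab : P (Γ k * Γ (2 * n - k))) (hadd : ∀ x y, P x → P y → P (x + y))
    (hsmul : ∀ (r : ℂ) x, P x → P (r • x)) : P p := by
  refine Submodule.span_induction (p := fun x _ => P x) ?_ ?_ (fun x y _ _ => hadd x y)
    (fun r x _ => hsmul r x) hp
  · rintro x (rfl | rfl | rfl | rfl) <;> assumption
  · simpa using hsmul 0 _ h1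

open scoped Pointwise in
lemma exists_finset_span_pairSpanProd (n : ℕ) (Γ : ℕ → A) (m : ℕ) :
    ∃ S : Finset A, S.card ≤ 4 ^ m ∧ Submodule.span ℂ (S : Set A) = pairSpanProd n Γ m := by
  classical
  induction m with
  | zero => exact ⟨{1}, by simp, by simp [pairSpanProd, Submodule.one_eq_span]⟩
  | succ m ih =>
    obtain ⟨S, hS, hspan⟩ := ih
    refine ⟨S * ({1, Γ m, Γ (2 * n - m), Γ m * Γ (2 * n - m)} : Finset A), ?_, ?_⟩
    · rw [pow_succ]
      exact Finset.card_mul_le.trans (Nat.mul_le_mul hS Finset.card_le_four)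
    · rw [Finset.coe_mul, ← Submodule.span_mul_span, hspan]
      simp [pairSpanProd, pairSpan]

namespace IsCliffordFamily

variable {n : ℕ} {q c : ℂ} {Γ : ℕ → A}

lemma mul_pair_comm (h : IsCliffordFamily n q c Γ) {k j : ℕ} (hk : k < j) (hj : j + k < 2 * n) :
    Γ j * (Γ k * Γ (2 * n - k)) = Γ k * Γ (2 * n - k) * Γ j := by
  rw [← mul_assoc, h.swap k j hk (by omega) (by omega), mul_assoc,
    h.swap j (2 * n - k) (by omega) (by omega) (by omega), mul_smul_comm, smul_mul_assoc, mul_assoc]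

lemma partialSquare_comm (h : IsCliffordFamily n q c Γ) {m j : ℕ} (hm : m ≤ j)
    (hj : j + m ≤ 2 * n) : Γ j * partialSquare n q c Γ m = partialSquare n q c Γ m * Γ j := by
  simp only [partialSquare, mul_add, add_mul, Finset.mul_sum, Finset.sum_mul]
  congr 1
  · simp
  · refine Finset.sum_congr rfl fun k hk => ?_
    have := Finset.mem_range.mp hk
    rw [mul_smul_comm, smul_mul_assoc, h.mul_pair_comm (by omega) (by omega)]

lemma pairSpan_comm (h : IsCliffordFamily n q c Γ) {m : ℕ} (hm : m < n) {p : A}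
    (hp : p ∈ pairSpan n Γ m) : p * partialSquare n q c Γ m = partialSquare n q c Γ m * p := by
  have ha := h.partialSquare_comm (m := m) (j := m) le_rfl (by omega)
  have hb := h.partialSquare_comm (m := m) (j := 2 * n - m) (by omega) (by omega)
  refine pairSpan_induction
    (P := fun p => p * partialSquare n q c Γ m = partialSquare n q c Γ m * p)
    hp (by rw [one_mul, mul_one]) ha hb ?_ ?_ ?_
  · rw [mul_assoc, hb, ← mul_assoc, ha, mul_assoc]
  · intro x y hx hy
    rw [add_mul, mul_add, hx, hy]
  · intro r x hx
    rw [smul_mul_assoc, mul_smul_comm, hx]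

lemma right_mul_pair (h : IsCliffordFamily n q c Γ) {m : ℕ} (hm : m < n) :
    Γ (2 * n - m) * (Γ m * Γ (2 * n - m)) =
      anticommScalar n q m • (partialSquare n q c Γ m * Γ (2 * n - m)) := by
  rw [← mul_assoc, h.pair m hm, add_mul, neg_mul, mul_assoc,
    h.sq (2 * n - m) (by omega) (by omega), smul_mul_assoc]
  simp

lemma pairSpanProd_mul_partialSquare (h : IsCliffordFamily n q c Γ) {m : ℕ} (hm : m ≤ n) :
    ∀ y ∈ pairSpanProd n Γ m, y * partialSquare n q c Γ m ∈ pairSpanProd n Γ m := by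
  induction m with
  | zero =>
    intro y hy
    rw [partialSquare_zero, mul_smul_comm, mul_one]
    exact Submodule.smul_mem _ _ hy
  | succ m ih =>
    have ih := ih (by omega)
    have hT : ∀ y ∈ pairSpanProd n Γ m, ∀ p ∈ pairSpan n Γ m,
        y * (partialSquare n q c Γ m * p) ∈ pairSpanProd n Γ (m + 1) := fun y hy p hp => by
      rw [← mul_assoc]
      exact Submodule.mul_mem_mul (ih y hy) hp
    intro y hy
    refine Submodule.mul_induction_on hy (fun y hy p hp => ?_) fun x y hx hy => ?_
    · rw [partialSquare_succ, mul_add, mul_assoc, h.pairSpan_comm (by omega) hp, mul_smul_comm]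
      refine Submodule.add_mem _ (hT y hy p hp) (Submodule.smul_mem _ _ ?_)
      rw [mul_assoc]
      refine pairSpan_induction
        (P := fun p => y * (p * (Γ m * Γ (2 * n - m))) ∈ pairSpanProd n Γ (m + 1))
        hp ?_ ?_ ?_ ?_ ?_ ?_
      · rw [one_mul]
        exact Submodule.mul_mem_mul hy (mul_mem_pairSpan n Γ m)
      · rw [← mul_assoc (Γ m), h.sq m (by omega) (by omega)]
        simp
      · rw [h.right_mul_pair (by omega), mul_smul_comm]
        exact Submodule.smul_mem _ _ (hT y hy _ (right_mem_pairSpan n Γ m))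
      · rw [mul_assoc (Γ m), h.right_mul_pair (by omega), mul_smul_comm, ← mul_assoc,
          h.partialSquare_comm le_rfl (by omega), mul_smul_comm, mul_assoc]
        exact Submodule.smul_mem _ _ (hT y hy _ (mul_mem_pairSpan n Γ m))
      · intro u v hu hv
        rw [add_mul, mul_add]
        exact Submodule.add_mem _ hu hv
      · intro r u hu
        rw [smul_mul_assoc, mul_smul_comm]
        exact Submodule.smul_mem _ _ hu
    · rw [add_mul]
      exact Submodule.add_mem _ hx hy

lemma gen_mul_pairSpan (h : IsCliffordFamily n q c Γ) (hq : q ≠ 0) {k j : ℕ} (hk : k < j)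
    (hj : j + k < 2 * n) {p : A} (hp : p ∈ pairSpan n Γ k) :
    ∃ p' ∈ pairSpan n Γ k, Γ j * p = p' * Γ j := by
  refine pairSpan_induction (P := fun p => ∃ p' ∈ pairSpan n Γ k, Γ j * p = p' * Γ j) hp
    ⟨1, one_mem_pairSpan n Γ k, by simp⟩
    ⟨_, Submodule.smul_mem _ (-(q ^ 2)) (left_mem_pairSpan n Γ k), ?_⟩
    ⟨_, Submodule.smul_mem _ (-(q ^ 2))⁻¹ (right_mem_pairSpan n Γ k), ?_⟩
    ⟨_, mul_mem_pairSpan n Γ k, h.mul_pair_comm hk hj⟩ ?_ ?_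
  · rw [h.swap k j hk (by omega) (by omega), smul_mul_assoc]
  · rw [smul_mul_assoc, h.swap j (2 * n - k) (by omega) (by omega) (by omega), smul_smul,
      inv_mul_cancel₀ (by simpa using hq), one_smul]
  · rintro x y ⟨x', hx, hx'⟩ ⟨y', hy, hy'⟩
    exact ⟨x' + y', Submodule.add_mem _ hx hy, by rw [mul_add, add_mul, hx', hy']⟩
  · rintro r x ⟨x', hx, hx'⟩
    exact ⟨r • x', Submodule.smul_mem _ _ hx, by rw [mul_smul_comm, smul_mul_assoc, hx']⟩

lemma gen_mul_pairSpanProd_of_le (h : IsCliffordFamily n q c Γ) (hq : q ≠ 0) {m j : ℕ}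
    (hm : m ≤ j) (hj : j + m ≤ 2 * n) :
    ∀ y ∈ pairSpanProd n Γ m, ∃ y' ∈ pairSpanProd n Γ m, Γ j * y = y' * Γ j := by
  induction m with
  | zero =>
    intro y hy
    obtain ⟨r, rfl⟩ := Submodule.mem_one.mp hy
    exact ⟨_, hy, (Algebra.commutes r (Γ j)).symm⟩
  | succ m ih =>
    intro y hy
    refine Submodule.mul_induction_on hy (fun y hy p hp => ?_) ?_
    · obtain ⟨y', hy', e⟩ := ih (by omega) (by omega) y hy
      obtain ⟨p', hp', e'⟩ := h.gen_mul_pairSpan hq (show m < j by omega) (by omega) hp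
      exact ⟨y' * p', Submodule.mul_mem_mul hy' hp', by
        rw [← mul_assoc, e, mul_assoc, e', mul_assoc]⟩
    · rintro x y ⟨x', hx, hx'⟩ ⟨y', hy, hy'⟩
      exact ⟨x' + y', Submodule.add_mem _ hx hy, by rw [mul_add, add_mul, hx', hy']⟩

lemma gen_mul_mem_pairSpanProd_succ (h : IsCliffordFamily n q c Γ) (hq : q ≠ 0) {i j : ℕ}
    (hi : i < n) (hj : j = i ∨ j = 2 * n - i) :
    ∀ y ∈ pairSpanProd n Γ (i + 1), Γ j * y ∈ pairSpanProd n Γ (i + 1) := by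
  have hT : ∀ y ∈ pairSpanProd n Γ i, ∀ p ∈ pairSpan n Γ i,
      y * (partialSquare n q c Γ i * p) ∈ pairSpanProd n Γ (i + 1) := fun y hy p hp => by
    rw [← mul_assoc]
    exact Submodule.mul_mem_mul (h.pairSpanProd_mul_partialSquare hi.le y hy) hp
  have ha := left_mem_pairSpan n Γ i
  have hb := right_mem_pairSpan n Γ i
  have hab := mul_mem_pairSpan n Γ i
  intro y hy
  refine Submodule.mul_induction_on hy (fun y hy p hp => ?_) fun x y hx hy => ?_
  · obtain ⟨y', hy', e⟩ :=
      h.gen_mul_pairSpanProd_of_le hq (show i ≤ j by omega) (by omega) y hy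
    rw [← mul_assoc, e, mul_assoc]
    refine pairSpan_induction (P := fun p => y' * (Γ j * p) ∈ pairSpanProd n Γ (i + 1))
      hp ?_ ?_ ?_ ?_ ?_ ?_
    · rw [mul_one]
      rcases hj with rfl | rfl
      exacts [Submodule.mul_mem_mul hy' ha, Submodule.mul_mem_mul hy' hb]
    · rcases hj with rfl | rfl
      · rw [h.sq _ (by omega) (by omega)]
        simp
      · rw [h.pair i hi, mul_add, mul_neg, mul_smul_comm]
        refine Submodule.add_mem _ (Submodule.neg_mem _ (Submodule.mul_mem_mul hy' hab))
          (Submodule.smul_mem _ _ ?_)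
        simpa using hT y' hy' 1 (one_mem_pairSpan n Γ i)
    · rcases hj with rfl | rfl
      · exact Submodule.mul_mem_mul hy' hab
      · rw [h.sq _ (by omega) (by omega)]
        simp
    · rcases hj with rfl | rfl
      · rw [← mul_assoc (Γ j), h.sq _ (by omega) (by omega)]
        simp
      · rw [h.right_mul_pair hi, mul_smul_comm]
        exact Submodule.smul_mem _ _ (hT y' hy' _ hb)
    · intro u v hu hv
      rw [mul_add, mul_add]
      exact Submodule.add_mem _ hu hv
    · intro r u hu
      rw [mul_smul_comm, mul_smul_comm]
      exact Submodule.smul_mem _ _ hu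
  · rw [mul_add]
    exact Submodule.add_mem _ hx hy

lemma gen_mul_mem_pairSpanProd (h : IsCliffordFamily n q c Γ) (hq : q ≠ 0) {i j m : ℕ}
    (hi : i < n) (hj : j = i ∨ j = 2 * n - i) (hm : i + 1 ≤ m) :
    ∀ y ∈ pairSpanProd n Γ m, Γ j * y ∈ pairSpanProd n Γ m := by
  induction m, hm using Nat.le_induction with
  | base => exact h.gen_mul_mem_pairSpanProd_succ hq hi hj
  | succ m _ ih =>
    intro y hy
    refine Submodule.mul_induction_on hy (fun y hy p hp => ?_) fun x y hx hy => ?_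
    · rw [← mul_assoc]
      exact Submodule.mul_mem_mul (ih y hy) hp
    · rw [mul_add]
      exact Submodule.add_mem _ hx hy

/-- The span of the monomials in the `Γ_i` is stable under left multiplication by each `Γ_j`. -/
lemma gen_mul_mem_span (h : IsCliffordFamily n q c Γ) (hq : q ≠ 0) {j : ℕ} (hj : j ≤ 2 * n) :
    ∀ y ∈ pairSpanProd n Γ n * Submodule.span ℂ {1, Γ n},
      Γ j * y ∈ pairSpanProd n Γ n * Submodule.span ℂ {1, Γ n} := by
  intro y hy
  refine Submodule.mul_induction_on hy (fun y hy z hz => ?_) fun x y hx hy => ?_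
  · rcases lt_trichotomy j n with hjn | rfl | hjn
    · rw [← mul_assoc]
      exact Submodule.mul_mem_mul (h.gen_mul_mem_pairSpanProd hq hjn (.inl rfl) hjn y hy) hz
    · obtain ⟨y', hy', e⟩ := h.gen_mul_pairSpanProd_of_le hq le_rfl (by omega) y hy
      rw [← mul_assoc, e, mul_assoc]
      obtain ⟨r, s, rfl⟩ := Submodule.mem_span_pair.mp hz
      rw [mul_add, mul_add, mul_smul_comm, mul_smul_comm, mul_smul_comm, mul_smul_comm, h.middle,
        mul_one]
      refine Submodule.add_mem _ (Submodule.smul_mem _ _ ?_) (Submodule.smul_mem _ _ ?_)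
      · exact Submodule.mul_mem_mul hy' (Submodule.subset_span (by simp))
      · simpa using Submodule.mul_mem_mul (h.pairSpanProd_mul_partialSquare le_rfl y' hy')
          (Submodule.subset_span (s := {1, Γ j}) (by simp) : (1 : A) ∈ Submodule.span ℂ {1, Γ j})
    · rw [← mul_assoc]
      exact Submodule.mul_mem_mul (h.gen_mul_mem_pairSpanProd hq (i := 2 * n - j) (by omega)
        (.inr (by omega)) (by omega) y hy) hz
  · rw [mul_add]
    exact Submodule.add_mem _ hx hy

end IsCliffordFamily

lemma map_pairSum {n : ℕ} (q : ℂ) {Γ : ℕ → A} (F : FreeAlgebra ℂ (Fin (2 * n + 1)) →ₐ[ℂ] A)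
    (hF : ∀ i, F (gen i) = Γ i.val) (i : Fin (2 * n + 1)) :
    F (pairSum (2 * n + 1) q i) = ∑ k ∈ Finset.range i.val,
      q ^ (2 * (k : ℤ) - 2 * (i.val : ℤ) + 2) • (Γ k * Γ (2 * n - k)) := by
  simp only [pairSum, map_sum, map_smul, map_mul, hF]
  rw [← Nat.Iio_eq_range, ← Fin.map_valEmbedding_Iio, Finset.sum_map]
  simp [dual]

lemma map_pair_rel {n : ℕ} {q : ℂ} (hq : q ≠ 0) (c : ℂ) {Γ : ℕ → A}
    (F : FreeAlgebra ℂ (Fin (2 * n + 1)) →ₐ[ℂ] A)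
    (hF : ∀ i, F (gen i) = Γ i.val) (i : Fin (2 * n + 1)) :
    F ((q ^ 2 - q⁻¹ ^ 2) • pairSum (2 * n + 1) q i +
      algebraMap ℂ _ (c ^ 2 * q ^ (((2 * n + 1 : ℕ) : ℤ) - 2 * (i.val : ℤ) - 1) * (q + q⁻¹))) =
      anticommScalar n q i.val • partialSquare n q c Γ i.val := by
  rw [map_add, map_smul, map_pairSum q F hF, AlgHom.commutes, partialSquare, anticommScalar,
    smul_add, add_comm, Algebra.algebraMap_eq_smul_one, smul_smul]
  congr 1
  · congr 1
    push_cast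
    rw [show (2 * (n : ℤ) + 1 - 2 * (i.val : ℤ) - 1) = 2 * (n : ℤ) - 2 * (i.val : ℤ) by ring]
    ring
  · rw [Finset.smul_sum, Finset.smul_sum]
    refine Finset.sum_congr rfl fun k _ => ?_
    rw [smul_smul, smul_smul]
    congr 1
    rw [show (2 * (k : ℤ) - 2 * (i.val : ℤ) + 2) =
      (2 * (n : ℤ) - 2 * (i.val : ℤ)) + (2 - 2 * (n : ℤ) + 2 * (k : ℤ)) by ring, zpow_add₀ hq]
    ring

lemma map_middle_rel {n : ℕ} (q c : ℂ) {Γ : ℕ → A}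
    (F : FreeAlgebra ℂ (Fin (2 * n + 1)) →ₐ[ℂ] A)
    (hF : ∀ i, F (gen i) = Γ i.val) (i : Fin (2 * n + 1)) (hi : i.val = n) :
    F ((q - q⁻¹) • pairSum (2 * n + 1) q i + algebraMap ℂ _ (c ^ 2)) =
      partialSquare n q c Γ n := by
  rw [map_add, map_smul, map_pairSum q F hF, AlgHom.commutes, partialSquare, add_comm,
    Algebra.algebraMap_eq_smul_one, Finset.smul_sum, hi]
  congr 1
  refine Finset.sum_congr rfl fun k _ => ?_
  rw [smul_smul, show (2 * (k : ℤ) - 2 * (n : ℤ) + 2) = 2 - 2 * (n : ℤ) + 2 * (k : ℤ) by ring]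

/-- The generators of `Cl_{2n+1}(q,c)`, indexed by natural numbers. -/
def clGen (n : ℕ) (q c : ℂ) (i : ℕ) : Cl (2 * n + 1) q c :=
  if h : i < 2 * n + 1 then γ (2 * n + 1) q c ⟨i, h⟩ else 0

lemma clGen_val (n : ℕ) (q c : ℂ) (i : Fin (2 * n + 1)) :
    clGen n q c i.val = γ (2 * n + 1) q c i :=
  dif_pos i.isLt

lemma isCliffordFamily_clGen (n : ℕ) {q : ℂ} (hq : q ≠ 0) (c : ℂ) :
    IsCliffordFamily n q c (clGen n q c) := by
  have hF : ∀ i, RingQuot.mkAlgHom ℂ (Rel (2 * n + 1) q c) (gen i) = clGen n q c i.val :=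
    fun i => (clGen_val n q c i).symm
  refine ⟨fun i hi hin => ?_, fun i j hij hj hne => ?_, fun i hi => ?_, ?_⟩
  · simpa only [map_mul, hF, map_zero] using RingQuot.mkAlgHom_rel ℂ
      (Rel.sq (q := q) (c := c) (⟨i, by omega⟩ : Fin (2 * n + 1)) (by simpa using hin))
  · simpa only [map_mul, map_smul, hF] using RingQuot.mkAlgHom_rel ℂ
      (Rel.swap (q := q) (c := c) (⟨i, by omega⟩ : Fin (2 * n + 1)) ⟨j, by omega⟩ hij
        (by simpa using hne))
  · have := RingQuot.mkAlgHom_rel ℂ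
      (Rel.pair (q := q) (c := c) (⟨i, by omega⟩ : Fin (2 * n + 1)) (by simpa using hi))
    rw [add_assoc, map_add, map_pair_rel hq c _ hF] at this
    simpa only [map_mul, map_neg, hF, dual, Nat.add_sub_cancel] using this
  · have := RingQuot.mkAlgHom_rel ℂ
      (Rel.middle (q := q) (c := c) (⟨n, by omega⟩ : Fin (2 * n + 1)) rfl)
    rw [map_middle_rel q c _ hF _ rfl] at this
    simpa only [map_mul, hF] using this

lemma IsCliffordFamily.rel {n : ℕ} {q c : ℂ} (hq : q ≠ 0) {Γ : ℕ → A}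
    (h : IsCliffordFamily n q c Γ) ⦃x y : FreeAlgebra ℂ (Fin (2 * n + 1))⦄
    (hxy : Rel (2 * n + 1) q c x y) :
    FreeAlgebra.lift ℂ (fun i : Fin (2 * n + 1) => Γ i.val) x =
      FreeAlgebra.lift ℂ (fun i : Fin (2 * n + 1) => Γ i.val) y := by
  have hF : ∀ i, FreeAlgebra.lift ℂ (fun i : Fin (2 * n + 1) => Γ i.val) (gen i) = Γ i.val :=
    fun i => by simp [gen]
  cases hxy with
  | sq i hi =>
    simpa only [map_mul, hF, map_zero] using h.sq i.val (by omega) (by omega)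
  | swap i j hlt hij =>
    simpa only [map_mul, map_smul, hF] using h.swap i.val j.val hlt (by omega) (by omega)
  | pair i hi =>
    rw [add_assoc, map_add, map_pair_rel hq c _ hF]
    simpa only [map_mul, map_neg, hF, dual, Nat.add_sub_cancel] using h.pair i.val (by omega)
  | middle i hi =>
    have hi : i.val = n := by omega
    rw [map_middle_rel q c _ hF _ hi, map_mul, hF, hi]
    exact h.middle

/-- The algebra homomorphism out of `Cl_{2n+1}(q,c)` determined by a Clifford family. -/
def IsCliffordFamily.lift {n : ℕ} {q c : ℂ} (hq : q ≠ 0) {Γ : ℕ → A}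
    (h : IsCliffordFamily n q c Γ) : Cl (2 * n + 1) q c →ₐ[ℂ] A :=
  RingQuot.liftAlgHom ℂ ⟨FreeAlgebra.lift ℂ (fun i : Fin (2 * n + 1) => Γ i.val), h.rel hq⟩

lemma IsCliffordFamily.lift_γ {n : ℕ} {q c : ℂ} (hq : q ≠ 0) {Γ : ℕ → A}
    (h : IsCliffordFamily n q c Γ) (i : Fin (2 * n + 1)) :
    h.lift hq (γ (2 * n + 1) q c i) = Γ i.val := by
  simp [IsCliffordFamily.lift, γ, gen]

lemma span_clGen_eq_top (n : ℕ) {q : ℂ} (hq : q ≠ 0) (c : ℂ) :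
    pairSpanProd n (clGen n q c) n * Submodule.span ℂ {1, clGen n q c n} = ⊤ := by
  set W := pairSpanProd n (clGen n q c) n * Submodule.span ℂ {1, clGen n q c n}
  have key : ∀ x : FreeAlgebra ℂ (Fin (2 * n + 1)), ∀ w ∈ W,
      RingQuot.mkAlgHom ℂ (Rel (2 * n + 1) q c) x * w ∈ W := by
    intro x
    induction x using FreeAlgebra.induction with
    | grade0 r =>
      intro w hw
      rw [AlgHom.commutes, ← Algebra.smul_def]
      exact W.smul_mem r hw
    | grade1 i =>
      intro w hw
      have := (isCliffordFamily_clGen n hq c).gen_mul_mem_span hq (show i.val ≤ 2 * n by omega) w hw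
      rwa [clGen_val] at this
    | mul a b ha hb =>
      intro w hw
      rw [map_mul, mul_assoc]
      exact ha _ (hb w hw)
    | add a b ha hb =>
      intro w hw
      rw [map_add, add_mul]
      exact W.add_mem (ha w hw) (hb w hw)
  have h1 : (1 : Cl (2 * n + 1) q c) ∈ W := by
    rw [← mul_one (1 : Cl (2 * n + 1) q c)]
    exact Submodule.mul_mem_mul (one_mem_pairSpanProd n _ n) (Submodule.subset_span (by simp))
  refine eq_top_iff.mpr fun x _ => ?_
  obtain ⟨x, rfl⟩ := RingQuot.mkAlgHom_surjective ℂ (Rel (2 * n + 1) q c) x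
  simpa using key x 1 h1

open scoped Pointwise in
lemma exists_finset_span_cl (n : ℕ) {q : ℂ} (hq : q ≠ 0) (c : ℂ) :
    ∃ S : Finset (Cl (2 * n + 1) q c), S.card ≤ 4 ^ n * 2 ∧
      Submodule.span ℂ (S : Set (Cl (2 * n + 1) q c)) = ⊤ := by
  classical
  obtain ⟨S, hS, hspan⟩ := exists_finset_span_pairSpanProd n (clGen n q c) n
  refine ⟨S * ({1, clGen n q c n} : Finset (Cl (2 * n + 1) q c)),
    Finset.card_mul_le.trans (Nat.mul_le_mul hS Finset.card_le_two), ?_⟩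
  rw [Finset.coe_mul, ← Submodule.span_mul_span, hspan]
  simpa using span_clGen_eq_top n hq c

lemma finite_cl (n : ℕ) {q : ℂ} (hq : q ≠ 0) (c : ℂ) : Module.Finite ℂ (Cl (2 * n + 1) q c) := by
  obtain ⟨S, -, hS⟩ := exists_finset_span_cl n hq c
  exact ⟨⟨S, hS⟩⟩

lemma finrank_cl_le (n : ℕ) {q : ℂ} (hq : q ≠ 0) (c : ℂ) :
    Module.finrank ℂ (Cl (2 * n + 1) q c) ≤ 4 ^ n * 2 := by
  obtain ⟨S, hcard, hS⟩ := exists_finset_span_cl n hq c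
  rw [← finrank_top, ← hS]
  exact (finrank_span_finset_le_card S).trans hcard

section Ideals

variable {B M M' : Type*} [Ring B] [Algebra ℂ B] [Ring M] [Algebra ℂ M] [Ring M'] [Algebra ℂ M']

variable (M M') in
/-- Interchanging the factors of `M × M'`. -/
def prodSwap : (M × M') ≃ₐ[ℂ] M' × M := AlgEquiv.ofRingEquiv (f := RingEquiv.prodComm) fun _ => rfl

@[simp] lemma prodSwap_apply (x : M × M') : prodSwap M M' x = x.swap := rfl

/-- A two-sided ideal of `M × M'`, with `M` simple, contains `M × 0` as soon as one of its elements
has nonzero first coordinate. -/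
lemma symm_inl_mem [IsSimpleRing M] (f : B ≃ₐ[ℂ] M × M') (J : TwoSidedIdeal B) {a : B}
    (ha : a ∈ J) (ha' : (f a).1 ≠ 0) (m : M) : f.symm (m, 0) ∈ J := by
  have hmul : ∀ x y : M, f.symm (x * y, 0) = f.symm (x, 0) * f.symm (y, 0) := fun x y => by
    rw [← map_mul]
    simp
  let K : TwoSidedIdeal M := TwoSidedIdeal.mk' {x | f.symm (x, 0) ∈ J}
    (by
      rw [Set.mem_ofPred_eq, ← Prod.zero_eq_mk, map_zero]
      exact J.zero_mem)
    (fun {x y} hx hy => by simpa [← map_add] using J.add_mem hx hy)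
    (fun {x} hx => by simpa [← map_neg] using J.neg_mem hx)
    (fun {x y} hy => by
      simp only [Set.mem_ofPred_eq, hmul] at hy ⊢
      exact J.mul_mem_left _ _ hy)
    (fun {x y} hx => by
      simp only [Set.mem_ofPred_eq, hmul] at hx ⊢
      exact J.mul_mem_right _ _ hx)
  have hK : ∀ x, x ∈ K ↔ f.symm (x, 0) ∈ J := fun x => TwoSidedIdeal.mem_mk' ..
  have h1 : (1 : M) ∈ K := by
    refine IsSimpleRing.one_mem_of_ne_zero_mem K ha' ((hK _).2 ?_)
    have : f.symm ((f a).1, 0) = f.symm (1, 0) * a := f.injective (by ext <;> simp)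
    rw [this]
    exact J.mul_mem_left _ _ ha
  rw [← hK, ← mul_one m]
  exact K.mul_mem_left _ _ h1

lemma eq_zero_of_mem_span_singleton (g : B →ₐ[ℂ] M) {ρ z : B} (hρ : g ρ = 0)
    (hz : z ∈ TwoSidedIdeal.span {ρ}) : g z = 0 := by
  have : TwoSidedIdeal.span {ρ} ≤ TwoSidedIdeal.ker (g : B →+* M) := by
    rw [TwoSidedIdeal.span_le]
    rintro _ rfl
    simpa [TwoSidedIdeal.mem_ker] using hρ
  simpa [TwoSidedIdeal.mem_ker] using this hz

lemma mem_span_iff_snd_eq_zero [IsSimpleRing M] (f : B ≃ₐ[ℂ] M × M') {ρ : B}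
    (h1 : (f ρ).1 ≠ 0) (h2 : (f ρ).2 = 0) (a : B) :
    a ∈ TwoSidedIdeal.span {ρ} ↔ (f a).2 = 0 := by
  constructor
  · exact eq_zero_of_mem_span_singleton ((AlgHom.snd ℂ M M').comp (f : B →ₐ[ℂ] M × M')) h2
  · intro ha
    have : a = f.symm ((f a).1, 0) := f.injective (by ext <;> simp [ha])
    rw [this]
    exact symm_inl_mem f _ (TwoSidedIdeal.subset_span (Set.mem_singleton ρ)) h1 _

lemma eq_bot_or_eq_span [IsSimpleRing M] (f : B ≃ₐ[ℂ] M × M') {ρ : B}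
    (h1 : (f ρ).1 ≠ 0) (h2 : (f ρ).2 = 0) (J : TwoSidedIdeal B)
    (hJ : J ≤ TwoSidedIdeal.span {ρ}) : J = ⊥ ∨ J = TwoSidedIdeal.span {ρ} := by
  have hspan := mem_span_iff_snd_eq_zero f h1 h2
  rw [or_iff_not_imp_left]
  intro hne
  obtain ⟨a, ha, ha0⟩ := SetLike.exists_of_lt (bot_lt_iff_ne_bot.mpr hne)
  have ha1 : (f a).1 ≠ 0 := fun h0 => ha0 <| by
    have : a = 0 := f.injective (by ext <;> simp [h0, (hspan a).1 (hJ ha)])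
    rw [this]
    exact TwoSidedIdeal.zero_mem _
  refine le_antisymm hJ fun x hx => ?_
  have : x = f.symm ((f x).1, 0) := f.injective (by ext <;> simp [(hspan x).1 hx])
  rw [this]
  exact symm_inl_mem f J ha ha1 _

lemma rank_span_span {B M : Type} [Ring B] [Algebra ℂ B] [Ring M] [Algebra ℂ M] [IsSimpleRing M]
    (f : B ≃ₐ[ℂ] M × M') {ρ : B} (h1 : (f ρ).1 ≠ 0) (h2 : (f ρ).2 = 0) :
    Module.rank ℂ (Submodule.span ℂ ((TwoSidedIdeal.span {ρ} : TwoSidedIdeal B) : Set B)) =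
      Module.rank ℂ M := by
  let g : M →ₗ[ℂ] B := f.symm.toLinearMap ∘ₗ LinearMap.inl ℂ M M'
  have hg : Function.Injective g := f.symm.injective.comp LinearMap.inl_injective
  have hrange : ((TwoSidedIdeal.span {ρ} : TwoSidedIdeal B) : Set B) = LinearMap.range g := by
    ext a
    rw [SetLike.mem_coe, mem_span_iff_snd_eq_zero f h1 h2, SetLike.mem_coe, LinearMap.mem_range]
    constructor
    · exact fun ha => ⟨(f a).1, f.injective (by ext <;> simp [g, ha])⟩
    · rintro ⟨m, rfl⟩
      simp [g]
  rw [hrange, Submodule.span_eq]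
  exact (LinearEquiv.ofInjective g hg).rank_eq.symm

lemma span_sup_span_eq_top [IsSimpleRing M] [IsSimpleRing M'] (f : B ≃ₐ[ℂ] M × M') {ρ ρ' : B}
    (h1 : (f ρ).1 ≠ 0) (h2 : (f ρ).2 = 0) (h1' : (f ρ').1 = 0) (h2' : (f ρ').2 ≠ 0) :
    TwoSidedIdeal.span {ρ} ⊔ TwoSidedIdeal.span {ρ'} = ⊤ := by
  have hspan' := mem_span_iff_snd_eq_zero (f.trans (prodSwap M M')) (ρ := ρ') h2' h1'
  refine eq_top_iff.mpr fun x _ => ?_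
  have hx : x = f.symm ((f x).1, 0) + f.symm (0, (f x).2) := f.injective (by ext <;> simp)
  rw [hx]
  refine TwoSidedIdeal.add_mem _
    (le_sup_left (a := TwoSidedIdeal.span {ρ}) ((mem_span_iff_snd_eq_zero f h1 h2 _).2 (by simp)))
    (le_sup_right (b := TwoSidedIdeal.span {ρ'}) ((hspan' _).2 (by simp)))

lemma span_inf_span_eq_bot [IsSimpleRing M] [IsSimpleRing M'] (f : B ≃ₐ[ℂ] M × M') {ρ ρ' : B}
    (h1 : (f ρ).1 ≠ 0) (h2 : (f ρ).2 = 0) (h1' : (f ρ').1 = 0) (h2' : (f ρ').2 ≠ 0) :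
    TwoSidedIdeal.span {ρ} ⊓ TwoSidedIdeal.span {ρ'} = ⊥ := by
  have hspan' := mem_span_iff_snd_eq_zero (f.trans (prodSwap M M')) (ρ := ρ') h2' h1'
  refine eq_bot_iff.mpr fun x hx => ?_
  have hx1 := (mem_span_iff_snd_eq_zero f h1 h2 _).1 (inf_le_left (α := TwoSidedIdeal B) hx)
  have hx2 := (hspan' x).1 (inf_le_right (α := TwoSidedIdeal B) hx)
  have : x = 0 := f.injective (by ext <;> simpa)
  rw [this]
  exact TwoSidedIdeal.zero_mem _

end Ideals

section Representation

/-- The space with basis the bit strings of length `n`. -/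
abbrev BitSpace (n : ℕ) := (Fin n → Bool) →₀ ℂ

variable {n : ℕ}

/-- The basis vector of `BitSpace n` attached to a bit string. -/
def bitVec (s : Fin n → Bool) : BitSpace n := Finsupp.single s 1

lemma bitSpace_ext {f g : Module.End ℂ (BitSpace n)} (h : ∀ s, f (bitVec s) = g (bitVec s)) :
    f = g :=
  Finsupp.lhom_ext' fun s => LinearMap.ext_ring (h s)

/-- The operator sending the basis vector of `s` to `α s` times that of `π s`. -/
def weightedMap (α : (Fin n → Bool) → ℂ) (π : (Fin n → Bool) → (Fin n → Bool)) :
    Module.End ℂ (BitSpace n) :=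
  Finsupp.linearCombination ℂ fun s => α s • bitVec (π s)

@[simp] lemma weightedMap_bitVec (α : (Fin n → Bool) → ℂ) (π : (Fin n → Bool) → (Fin n → Bool))
    (s : Fin n → Bool) : weightedMap α π (bitVec s) = α s • bitVec (π s) := by
  simp [weightedMap, bitVec]

/-- The product of the factors `-q²` over the bits of `s` that are set and lie below `m`. -/
def twist (q : ℂ) (m : ℕ) (s : Fin n → Bool) : ℂ :=
  ∏ k : Fin n, if k.val < m ∧ s k = true then -(q ^ 2) else 1

lemma twist_ne_zero {q : ℂ} (hq : q ≠ 0) (m : ℕ) (s : Fin n → Bool) : twist q m s ≠ 0 :=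
  Finset.prod_ne_zero_iff.mpr fun k _ => by split_ifs <;> simp [hq]

lemma twist_zero (q : ℂ) (s : Fin n → Bool) : twist q 0 s = 1 := by simp [twist]

lemma twist_false (q : ℂ) (m : ℕ) : twist q m (fun _ : Fin n => false) = 1 := by simp [twist]

lemma twist_update_of_le (q : ℂ) {m : ℕ} {k : Fin n} (hk : m ≤ k.val) (s : Fin n → Bool)
    (β : Bool) : twist q m (Function.update s k β) = twist q m s := by
  refine Finset.prod_congr rfl fun j _ => ?_
  rcases eq_or_ne j k with rfl | hj
  · simp [hk.not_gt]
  · rw [Function.update_of_ne hj]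

lemma twist_update_of_lt (q : ℂ) {m : ℕ} {k : Fin n} (hk : k.val < m) {s : Fin n → Bool}
    (hs : s k = false) : twist q m (Function.update s k true) = -(q ^ 2) * twist q m s := by
  rw [twist, twist, ← Finset.mul_prod_erase _ _ (Finset.mem_univ k),
    ← Finset.mul_prod_erase _ (fun j : Fin n => if j.val < m ∧ s j = true then -(q ^ 2) else 1)
      (Finset.mem_univ k)]
  simp only [hk, hs, Function.update_self, and_self, if_true, Bool.false_eq_true, and_false,
    if_false, one_mul]
  congr 1
  refine Finset.prod_congr rfl fun j hj => ?_
  rw [Function.update_of_ne (Finset.ne_of_mem_erase hj)]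

lemma twist_succ (q : ℂ) (i : Fin n) (s : Fin n → Bool) :
    twist q (i.val + 1) s = twist q i.val s * if s i = true then -(q ^ 2) else 1 := by
  rw [twist, twist, ← Finset.mul_prod_erase _ _ (Finset.mem_univ i),
    ← Finset.mul_prod_erase _
      (fun j : Fin n => if j.val < i.val ∧ s j = true then -(q ^ 2) else 1) (Finset.mem_univ i)]
  simp only [lt_irrefl, false_and, if_false, Nat.lt_succ_self, true_and, one_mul]
  rw [mul_comm]
  congr 1
  refine Finset.prod_congr rfl fun j hj => ?_
  have : j.val ≠ i.val := fun h => Finset.ne_of_mem_erase hj (Fin.ext h)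
  simp only [show j.val < i.val + 1 ↔ j.val < i.val by omega]

/-- The twisted operator setting bit `i` to `β`, and vanishing where that bit already is `β`. -/
def setBit (q : ℂ) (i : Fin n) (β : Bool) (w : ℂ) : Module.End ℂ (BitSpace n) :=
  weightedMap (fun s => if s i = β then 0 else w * twist q i.val s)
    (fun s => Function.update s i β)

lemma setBit_bitVec (q : ℂ) (i : Fin n) (β : Bool) (w : ℂ) (s : Fin n → Bool) :
    setBit q i β w (bitVec s) =
      (if s i = β then 0 else w * twist q i.val s) • bitVec (Function.update s i β) :=
  weightedMap_bitVec _ _ _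

lemma setBit_mul_self (q : ℂ) (i : Fin n) (β : Bool) (w : ℂ) :
    setBit q i β w * setBit q i β w = 0 :=
  bitSpace_ext fun s => by
    rw [Module.End.mul_apply, setBit_bitVec, map_smul, setBit_bitVec, Function.update_self,
      if_pos rfl, zero_smul, smul_zero, LinearMap.zero_apply]

/-- The compatibility with bit `k` that makes `weightedMap α π` commute with `setBit q k` up to
powers of `-q²`. -/
structure TwistsBit (q : ℂ) (k : Fin n) (α : (Fin n → Bool) → ℂ)
    (π : (Fin n → Bool) → (Fin n → Bool)) : Prop where
  coeff : ∀ s, s k = false → α (Function.update s k true) = -(q ^ 2) * α s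
  update : ∀ s β, π (Function.update s k β) = Function.update (π s) k β
  apply : ∀ s, π s k = s k
  twist : ∀ s, twist q k.val (π s) = twist q k.val s

lemma TwistsBit.mul_setBit_true {q : ℂ} {k : Fin n} {α : (Fin n → Bool) → ℂ}
    {π : (Fin n → Bool) → (Fin n → Bool)} (h : TwistsBit q k α π) (w : ℂ) :
    weightedMap α π * setBit q k true w = (-(q ^ 2)) • (setBit q k true w * weightedMap α π) := by
  refine bitSpace_ext fun s => ?_
  simp only [Module.End.mul_apply, LinearMap.smul_apply, setBit_bitVec, weightedMap_bitVec,
    map_smul, smul_smul, h.apply, h.twist, h.update]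
  by_cases hs : s k = true
  · simp [hs]
  · simp only [hs, h.coeff s (by simpa using hs)]
    congr 1
    ring

lemma TwistsBit.setBit_false_mul {q : ℂ} {k : Fin n} {α : (Fin n → Bool) → ℂ}
    {π : (Fin n → Bool) → (Fin n → Bool)} (h : TwistsBit q k α π) (w : ℂ) :
    setBit q k false w * weightedMap α π = (-(q ^ 2)) • (weightedMap α π * setBit q k false w) := by
  refine bitSpace_ext fun s => ?_
  simp only [Module.End.mul_apply, LinearMap.smul_apply, setBit_bitVec, weightedMap_bitVec,
    map_smul, smul_smul, h.apply, h.twist, h.update]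
  by_cases hs : s k = false
  · simp [hs]
  · have := h.coeff (Function.update s k false) (by simp)
    rw [Function.update_idem, show true = s k by simpa using Ne.symm hs,
      Function.update_eq_self] at this
    simp only [hs, this]
    congr 1
    ring

lemma twistsBit_setBit (q : ℂ) {k i : Fin n} (hki : k < i) (β : Bool) (w : ℂ) :
    TwistsBit q k (fun s => if s i = β then 0 else w * twist q i.val s)
      (fun s => Function.update s i β) where
  coeff s hs := by
    rw [Function.update_of_ne hki.ne', twist_update_of_lt q hki hs]
    split_ifs <;> ring
  update s β' := Function.update_comm hki.ne _ _ _
  apply s := Function.update_of_ne hki.ne _ _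
  twist s := twist_update_of_le q (Fin.le_def.mp hki.le) s β

lemma twistsBit_diagonal (q r : ℂ) (k : Fin n) :
    TwistsBit q k (fun s => r * twist q n s) (fun s => s) where
  coeff s hs := by
    rw [twist_update_of_lt q k.isLt hs]
    ring
  update _ _ := rfl
  apply _ := rfl
  twist _ := rfl

/-- The operators representing the generators of `Cl_{2n+1}(q,c)` on `BitSpace n`; the sign `η`
distinguishes the two spin representations. -/
def spinGen (n : ℕ) (q c η : ℂ) (j : ℕ) : Module.End ℂ (BitSpace n) :=
  if h : j < n then setBit q ⟨j, h⟩ true 1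
  else if j = n then weightedMap (fun s => η * c * twist q n s) (fun s => s)
  else if h : 2 * n - j < n then
    setBit q ⟨2 * n - j, h⟩ false (anticommScalar n q (2 * n - j) * c ^ 2)
  else 0

lemma spinGen_low (q c η : ℂ) (i : Fin n) : spinGen n q c η i.val = setBit q i true 1 := by
  simp [spinGen]

lemma spinGen_mid (q c η : ℂ) :
    spinGen n q c η n = weightedMap (fun s => η * c * twist q n s) (fun s => s) := by
  simp [spinGen]

lemma spinGen_high (q c η : ℂ) (i : Fin n) : spinGen n q c η (2 * n - i.val) =
    setBit q i false (anticommScalar n q i.val * c ^ 2) := by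
  have hi := i.isLt
  have e : 2 * n - (2 * n - i.val) = i.val := by omega
  simp only [spinGen, e]
  rw [dif_neg (by omega), if_neg (by omega), dif_pos hi]

lemma exists_spinGen_eq (q c η : ℂ) {k : Fin n} {j : ℕ} (hk : k.val < j)
    (hj : j + k.val < 2 * n) :
    ∃ α π, TwistsBit q k α π ∧ spinGen n q c η j = weightedMap α π := by
  rcases lt_trichotomy j n with h | rfl | h
  · exact ⟨_, _, twistsBit_setBit q (i := ⟨j, h⟩) hk true 1, spinGen_low q c η ⟨j, h⟩⟩
  · exact ⟨_, _, twistsBit_diagonal q (η * c) k, spinGen_mid q c η⟩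
  · have e : j = 2 * n - (2 * n - j) := by omega
    refine ⟨_, _, twistsBit_setBit q (i := ⟨2 * n - j, by omega⟩)
      (Fin.lt_def.mpr (by simp only; omega)) false
        (anticommScalar n q (2 * n - j) * c ^ 2), ?_⟩
    conv_lhs => rw [e]
    exact spinGen_high q c η ⟨2 * n - j, by omega⟩

lemma spinGen_pair_bitVec (q c η : ℂ) (i : Fin n) (s : Fin n → Bool) :
    (spinGen n q c η i.val * spinGen n q c η (2 * n - i.val)) (bitVec s) =
      (if s i = true then anticommScalar n q i.val * (c ^ 2 * twist q i.val s ^ 2) else 0) •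
        bitVec s := by
  rw [spinGen_low, spinGen_high, Module.End.mul_apply, setBit_bitVec, map_smul, setBit_bitVec,
    smul_smul, twist_update_of_le q le_rfl, Function.update_idem, Function.update_self]
  by_cases hs : s i = true
  · rw [← hs, Function.update_eq_self]
    simp only [hs]
    congr 1
    simp
    ring
  · simp [hs]

lemma spinGen_pair_bitVec' (q c η : ℂ) (i : Fin n) (s : Fin n → Bool) :
    (spinGen n q c η (2 * n - i.val) * spinGen n q c η i.val) (bitVec s) =
      (if s i = true then 0 else anticommScalar n q i.val * (c ^ 2 * twist q i.val s ^ 2)) •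
        bitVec s := by
  rw [spinGen_low, spinGen_high, Module.End.mul_apply, setBit_bitVec, map_smul, setBit_bitVec,
    smul_smul, twist_update_of_le q le_rfl, Function.update_idem, Function.update_self]
  by_cases hs : s i = true
  · simp [hs]
  · rw [show false = s i by simpa using Ne.symm hs, Function.update_eq_self]
    simp only [hs]
    congr 1
    simp
    ring

lemma partialSquare_spinGen {q : ℂ} (hq : q ≠ 0) (c η : ℂ) {m : ℕ} (hm : m ≤ n)
    (s : Fin n → Bool) : partialSquare n q c (spinGen n q c η) m (bitVec s) =
      (c ^ 2 * twist q m s ^ 2) • bitVec s := by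
  induction m with
  | zero => simp [partialSquare_zero, twist_zero]
  | succ m ih =>
    rw [partialSquare_succ, LinearMap.add_apply, LinearMap.smul_apply, ih (by omega),
      spinGen_pair_bitVec q c η ⟨m, hm⟩, twist_succ q ⟨m, hm⟩, smul_smul, ← add_smul]
    congr 1
    split_ifs
    · have : q ^ (2 - 2 * (n : ℤ) + 2 * (m : ℤ)) * q ^ (2 * (n : ℤ) - 2 * (m : ℤ)) = q ^ 2 := by
        rw [← zpow_add₀ hq, ← zpow_natCast]
        congr 1
        push_cast
        ring
      have h4 : (q - q⁻¹) * (q + q⁻¹) * q ^ 2 = q ^ 4 - 1 := by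
        field_simp
        ring
      rw [anticommScalar]
      linear_combination (c ^ 2 * twist q m s ^ 2) * ((q - q⁻¹) * (q + q⁻¹) * this + h4)
    · ring

lemma isCliffordFamily_spinGen {q : ℂ} (hq : q ≠ 0) (c : ℂ) {η : ℂ} (hη : η ^ 2 = 1) :
    IsCliffordFamily n q c (spinGen n q c η) where
  sq i hi hin := by
    rcases lt_or_gt_of_ne hin with h | h
    · rw [spinGen_low q c η ⟨i, h⟩, setBit_mul_self]
    · have := spinGen_high q c η (⟨2 * n - i, by omega⟩ : Fin n)
      simp only [show 2 * n - (2 * n - i) = i by omega] at this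
      rw [this, setBit_mul_self]
  swap i j hij hj hne := by
    rcases lt_or_gt_of_ne hne with h | h
    · obtain ⟨α, π, hT, e⟩ := exists_spinGen_eq q c η (k := (⟨i, by omega⟩ : Fin n)) hij
        (by simp only; omega)
      rw [e, spinGen_low q c η ⟨i, by omega⟩, hT.mul_setBit_true]
    · obtain ⟨α, π, hT, e⟩ := exists_spinGen_eq q c η
        (k := (⟨2 * n - j, by omega⟩ : Fin n)) (j := i) (by simp only; omega) (by simp only; omega)
      have := spinGen_high q c η (⟨2 * n - j, by omega⟩ : Fin n)
      simp only [show 2 * n - (2 * n - j) = j by omega] at this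
      rw [e, this, hT.setBit_false_mul]
  pair i hi := by
    refine bitSpace_ext fun s => ?_
    rw [LinearMap.add_apply, LinearMap.neg_apply, LinearMap.smul_apply,
      spinGen_pair_bitVec q c η ⟨i, hi⟩, spinGen_pair_bitVec' q c η ⟨i, hi⟩,
      partialSquare_spinGen hq c η hi.le, smul_smul, ← neg_smul, ← add_smul]
    congr 1
    split_ifs <;> ring
  middle := by
    refine bitSpace_ext fun s => ?_
    rw [partialSquare_spinGen hq c η le_rfl, spinGen_mid, Module.End.mul_apply, weightedMap_bitVec,
      map_smul, weightedMap_bitVec, smul_smul]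
    congr 1
    linear_combination (c ^ 2 * twist q n s ^ 2) * hη

lemma exists_prod_setBit {q : ℂ} (hq : q ≠ 0) (β : Bool) {w : Fin n → ℂ} (hw : ∀ i, w i ≠ 0)
    {l : List (Fin n)} (hl : l.Nodup) (s : Fin n → Bool) :
    ∃ r : ℂ, r ≠ 0 ∧ (l.map fun i => setBit q i β (w i)).prod (bitVec s) =
      if ∀ i ∈ l, s i ≠ β then r • bitVec (fun i => if i ∈ l then β else s i) else 0 := by
  induction l with
  | nil => exact ⟨1, one_ne_zero, by simp⟩
  | cons i t ih =>
    obtain ⟨hit, ht⟩ := List.nodup_cons.mp hl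
    obtain ⟨r, hr, e⟩ := ih ht
    refine ⟨r * (w i * twist q i.val fun j => if j ∈ t then β else s j),
      mul_ne_zero hr (mul_ne_zero (hw i) (twist_ne_zero hq _ _)), ?_⟩
    rw [List.map_cons, List.prod_cons, Module.End.mul_apply, e]
    by_cases h : ∀ j ∈ t, s j ≠ β
    · rw [if_pos h, map_smul, setBit_bitVec, if_neg hit]
      by_cases hi : s i = β
      · simp [hi]
      · rw [if_neg hi, if_pos (by simpa [hi] using h), smul_smul]
        congr 2
        funext j
        rcases eq_or_ne j i with rfl | hj
        · simp
        · simp [hj]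
    · rw [if_neg h, if_neg (fun h' => h fun j hj => h' j (List.mem_cons_of_mem _ hj)), map_zero]

lemma take_finRange (n : ℕ) : (List.finRange (2 * n + 1)).take n =
    (List.finRange n).map fun i => ⟨i.val, by omega⟩ := by
  refine List.ext_getElem ?_ fun i h1 h2 => ?_
  · simp
    omega
  · simp

lemma drop_finRange (n : ℕ) : (List.finRange (2 * n + 1)).drop (n + 1) =
    (List.finRange n).reverse.map fun i => ⟨2 * n - i.val, by omega⟩ := by
  refine List.ext_getElem ?_ fun i h1 h2 => ?_
  · simp
    omega
  · simp at h1 h2 ⊢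
    omega

lemma anticommScalar_ne_zero {q : ℂ} (hq : q ≠ 0) (hqr : ∀ m : ℕ, 0 < m → q ^ m ≠ 1) (i : ℕ) :
    anticommScalar n q i ≠ 0 := by
  refine mul_ne_zero (fun h => hqr 4 (by norm_num) ?_) (zpow_ne_zero _ hq)
  have h2 : q ^ 2 = -1 := by
    field_simp at h
    linear_combination h
  linear_combination (q ^ 2 - 1) * h2

/-- The spin representation of `Cl_{2n+1}(q,c)` on `BitSpace n` attached to a sign `η`. -/
def spinRep (n : ℕ) {q : ℂ} (hq : q ≠ 0) (c : ℂ) {η : ℂ} (hη : η ^ 2 = 1) :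
    Cl (2 * n + 1) q c →ₐ[ℂ] Module.End ℂ (BitSpace n) :=
  (isCliffordFamily_spinGen hq c hη).lift hq

lemma spinRep_γ {q : ℂ} (hq : q ≠ 0) (c : ℂ) {η : ℂ} (hη : η ^ 2 = 1) (i : Fin (2 * n + 1)) :
    spinRep n hq c hη (γ (2 * n + 1) q c i) = spinGen n q c η i.val :=
  IsCliffordFamily.lift_γ hq _ i

lemma spinRep_prod_low {q : ℂ} (hq : q ≠ 0) (c : ℂ) {η : ℂ} (hη : η ^ 2 = 1) (l : List (Fin n)) :
    spinRep n hq c hη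
      ((l.map fun i : Fin n => γ (2 * n + 1) q c ⟨i.val, by omega⟩).prod) =
      (l.map fun i => setBit q i true 1).prod := by
  rw [map_list_prod, List.map_map]
  congr 2
  funext i
  rw [Function.comp_apply, spinRep_γ, spinGen_low]

lemma spinRep_prod_high {q : ℂ} (hq : q ≠ 0) (c : ℂ) {η : ℂ} (hη : η ^ 2 = 1)
    (l : List (Fin n)) :
    spinRep n hq c hη
      ((l.map fun i : Fin n => γ (2 * n + 1) q c ⟨2 * n - i.val, by omega⟩).prod) =
      (l.map fun i => setBit q i false (anticommScalar n q i.val * c ^ 2)).prod := by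
  rw [map_list_prod, List.map_map]
  congr 2
  funext i
  rw [Function.comp_apply, spinRep_γ, spinGen_high]

/-- The operator sending the basis vector of `t` to that of `s` and killing the others. -/
def bitUnit (s t : Fin n → Bool) : Module.End ℂ (BitSpace n) :=
  weightedMap (fun u => if u = t then 1 else 0) (fun _ => s)

lemma bitUnit_bitVec (s t u : Fin n → Bool) :
    bitUnit s t (bitVec u) = if u = t then bitVec s else 0 := by
  rw [bitUnit, weightedMap_bitVec]
  split_ifs <;> simp

/-- The element `ρ_ε` acts as a multiple of a rank one operator, nonzero exactly when
`ε + η ≠ 0`. -/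
lemma spinRep_rhoOdd {q c : ℂ} (hq : q ≠ 0) (hqr : ∀ m : ℕ, 0 < m → q ^ m ≠ 1) (hc : c ≠ 0)
    {η : ℂ} (hη : η ^ 2 = 1) (ε : ℂ) :
    ∃ r : ℂ, r ≠ 0 ∧ spinRep n hq c hη (rhoOdd n q c ε) =
      (r * (ε + η)) • bitUnit (fun _ => true) (fun _ => true) := by
  obtain ⟨r, hr, er⟩ := exists_prod_setBit hq true (w := fun _ => 1) (fun _ => one_ne_zero)
    (List.nodup_finRange n) fun _ => false
  have hw : ∀ i : Fin n, anticommScalar n q i.val * c ^ 2 ≠ 0 := fun i =>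
    mul_ne_zero (anticommScalar_ne_zero hq hqr _) (pow_ne_zero 2 hc)
  have hnd := List.nodup_reverse.mpr (List.nodup_finRange n)
  obtain ⟨r', hr', er'⟩ := exists_prod_setBit hq false hw hnd fun _ => true
  refine ⟨r * r' * c, mul_ne_zero (mul_ne_zero hr hr') hc, bitSpace_ext fun s => ?_⟩
  simp only [rhoOdd, prodFirst, prodFrom, take_finRange, drop_finRange, List.map_map]
  rw [map_mul, map_mul, map_add, AlgHom.commutes, spinRep_γ, spinGen_mid, LinearMap.smul_apply,
    bitUnit_bitVec, Module.End.mul_apply, Module.End.mul_apply]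
  simp only [Function.comp_def]
  rw [spinRep_prod_low, spinRep_prod_high]
  by_cases hs : s = fun _ => true
  · subst hs
    rw [er']
    simp only [ne_eq, Bool.true_eq_false, not_false_eq_true, implies_true, if_true,
      List.mem_reverse, List.mem_finRange]
    rw [map_smul, LinearMap.add_apply, weightedMap_bitVec, twist_false, map_smul, map_add, map_smul,
      Module.algebraMap_end_apply, map_smul, er]
    simp only [ne_eq, Bool.false_eq_true, not_false_eq_true, implies_true, if_true,
      List.mem_finRange, smul_smul, ← add_smul]
    congr 1
    ring
  · obtain ⟨r'', -, er''⟩ := exists_prod_setBit hq false hw hnd s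
    rw [er'', if_neg, if_neg hs, map_zero, map_zero, smul_zero]
    intro h
    exact hs (funext fun i => by simpa using h i (by simp))

lemma exists_spinRep_mul_bitUnit_mul {q c : ℂ} (hq : q ≠ 0) (hqr : ∀ m : ℕ, 0 < m → q ^ m ≠ 1)
    (hc : c ≠ 0) {η : ℂ} (hη : η ^ 2 = 1) (s t : Fin n → Bool) :
    ∃ x y : Cl (2 * n + 1) q c, ∃ r : ℂ, r ≠ 0 ∧
      spinRep n hq c hη x * bitUnit (fun _ => true) (fun _ => true) * spinRep n hq c hη y =
        r • bitUnit s t := by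
  have hw : ∀ i : Fin n, anticommScalar n q i.val * c ^ 2 ≠ 0 := fun i =>
    mul_ne_zero (anticommScalar_ne_zero hq hqr _) (pow_ne_zero 2 hc)
  have hnd (u : Fin n → Bool) : ((List.finRange n).filter (fun i => u i = false)).Nodup :=
    (List.nodup_finRange n).filter _
  obtain ⟨r, hr, er⟩ := exists_prod_setBit hq false hw (hnd s) fun _ => true
  obtain ⟨r', hr', er'⟩ := exists_prod_setBit hq true (w := fun _ => 1) (fun _ => one_ne_zero)
    (hnd t) t
  refine ⟨(((List.finRange n).filter (fun i => s i = false)).map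
      fun i : Fin n => γ (2 * n + 1) q c ⟨2 * n - i.val, by omega⟩).prod,
    (((List.finRange n).filter (fun i => t i = false)).map
      fun i : Fin n => γ (2 * n + 1) q c ⟨i.val, by omega⟩).prod,
    r * r', mul_ne_zero hr hr', bitSpace_ext fun u => ?_⟩
  rw [spinRep_prod_high, spinRep_prod_low, Module.End.mul_apply, Module.End.mul_apply,
    LinearMap.smul_apply, bitUnit_bitVec]
  by_cases hu : u = t
  · subst hu
    have e1 : (fun i => if i ∈ (List.finRange n).filter (fun i => u i = false) then true else u i) =
        fun _ => true := by
      funext i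
      by_cases h : u i = false <;> simp [h]
    have e2 : (fun i => if i ∈ (List.finRange n).filter (fun i => s i = false) then false
        else true) = s := by
      funext i
      by_cases h : s i = false <;> simp [h]
    rw [er', if_pos (by simp), e1, map_smul, bitUnit_bitVec, if_pos rfl, map_smul, er,
      if_pos (by simp), e2, smul_smul, if_pos rfl, mul_comm]
  · obtain ⟨r'', -, er''⟩ := exists_prod_setBit hq true (w := fun _ => 1) (fun _ => one_ne_zero)
      (hnd t) u
    rw [er'', if_neg hu, smul_zero]
    split_ifs with h
    · rw [map_smul, bitUnit_bitVec, if_neg, smul_zero, map_zero]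
      intro h'
      refine hu (funext fun i => ?_)
      by_cases hi : t i = false
      · simpa [hi] using h i (by simp [hi])
      · simpa [hi] using congrFun h' i
    · rw [map_zero, map_zero]

lemma sum_smul_bitUnit (T : Module.End ℂ (BitSpace n)) :
    T = ∑ t, ∑ s, T (bitVec t) s • bitUnit s t := by
  refine bitSpace_ext fun u => ?_
  simp only [LinearMap.sum_apply, LinearMap.smul_apply, bitUnit_bitVec, smul_ite, smul_zero]
  rw [Finset.sum_eq_single u (fun t _ ht => by simp [ht.symm]) (by simp)]
  simp [bitVec, Finsupp.univ_sum_single]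

/-- The ideal generated by an element acting as a nonzero multiple of a matrix unit is mapped onto
all operators. -/
lemma exists_mem_span_spinRep_eq {q c : ℂ} (hq : q ≠ 0) (hqr : ∀ m : ℕ, 0 < m → q ^ m ≠ 1)
    (hc : c ≠ 0) {η : ℂ} (hη : η ^ 2 = 1) {ρ : Cl (2 * n + 1) q c} {r : ℂ} (hr : r ≠ 0)
    (hρ : spinRep n hq c hη ρ = r • bitUnit (fun _ => true) (fun _ => true))
    (T : Module.End ℂ (BitSpace n)) :
    ∃ z ∈ TwoSidedIdeal.span {ρ}, spinRep n hq c hη z = T := by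
  have hunit : ∀ s t, ∃ z ∈ TwoSidedIdeal.span {ρ}, spinRep n hq c hη z = bitUnit s t := by
    intro s t
    obtain ⟨x, y, r', hr', e⟩ := exists_spinRep_mul_bitUnit_mul hq hqr hc hη s t
    refine ⟨algebraMap ℂ _ (r * r')⁻¹ * (x * ρ * y), ?_, ?_⟩
    · exact TwoSidedIdeal.mul_mem_left _ _ _ (TwoSidedIdeal.mul_mem_right _ _ _
        (TwoSidedIdeal.mul_mem_left _ _ _ (TwoSidedIdeal.subset_span (Set.mem_singleton ρ))))
    · rw [← Algebra.smul_def, map_smul, map_mul, map_mul, hρ, mul_smul_comm, smul_mul_assoc, e,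
        smul_smul, smul_smul, mul_assoc, inv_mul_cancel₀ (mul_ne_zero hr hr'), one_smul]
  choose z hz ez using hunit
  refine ⟨∑ t, ∑ s, algebraMap ℂ _ (T (bitVec t) s) * z s t, ?_, ?_⟩
  · exact sum_mem fun t _ => sum_mem fun s _ => TwoSidedIdeal.mul_mem_left _ _ _ (hz s t)
  · simp only [map_sum, ← Algebra.smul_def, map_smul, ez]
    exact (sum_smul_bitUnit T).symm

end Representation

section Splitting

variable {n : ℕ}

/-- The algebra of operators on `BitSpace n`. -/
abbrev BitEnd (n : ℕ) := Module.End ℂ (BitSpace n)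

instance : IsSimpleRing (BitEnd n) :=
  let b : Module.Basis (Fin n → Bool) ℂ (BitSpace n) := Finsupp.basisSingleOne
  IsSimpleRing.of_ringEquiv (LinearMap.toMatrixAlgEquiv b).symm.toRingEquiv inferInstance

instance : IsSemisimpleRing (BitEnd n) :=
  have := IsArtinianRing.of_finite ℂ (BitEnd n)
  IsSimpleRing.isSemisimpleRing_iff_isArtinianRing.mpr this

lemma finrank_bitEnd : Module.finrank ℂ (BitEnd n) = 4 ^ n := by
  rw [Module.finrank_linearMap, Module.finrank_finsupp_self, Fintype.card_fun, Fintype.card_bool,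
    Fintype.card_fin, ← mul_pow]
  norm_num

lemma rank_bitEnd : Module.rank ℂ (BitEnd n) = 2 ^ (2 * n) := by
  rw [← Module.finrank_eq_rank, finrank_bitEnd, pow_mul]
  norm_num

lemma bitUnit_ne_zero (s t : Fin n → Bool) : bitUnit s t ≠ 0 := fun h => by
  have := LinearMap.congr_fun h (bitVec t)
  rw [bitUnit_bitVec, if_pos rfl] at this
  simp [bitVec] at this

/-- The sum of the two spin representations. -/
def spinPair (n : ℕ) {q : ℂ} (hq : q ≠ 0) (c : ℂ) :
    Cl (2 * n + 1) q c →ₐ[ℂ] BitEnd n × BitEnd n :=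
  (spinRep n hq c (η := 1) (by norm_num)).prod (spinRep n hq c (η := -1) (by norm_num))

lemma exists_spinPair_rhoOdd {q c : ℂ} (hq : q ≠ 0) (hqr : ∀ m : ℕ, 0 < m → q ^ m ≠ 1)
    (hc : c ≠ 0) : ∃ r : ℂ, r ≠ 0 ∧ spinPair n hq c (rhoOdd n q c 1) =
      (r • bitUnit (fun _ => true) (fun _ => true), 0) := by
  obtain ⟨r, hr, e⟩ := spinRep_rhoOdd (n := n) hq hqr hc (η := 1) (by norm_num) 1
  obtain ⟨r', -, e'⟩ := spinRep_rhoOdd (n := n) hq hqr hc (η := -1) (by norm_num) 1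
  refine ⟨r * (1 + 1), mul_ne_zero hr (by norm_num), Prod.ext e (e'.trans ?_)⟩
  rw [add_neg_cancel, mul_zero, zero_smul]

lemma exists_spinPair_rhoOdd_neg {q c : ℂ} (hq : q ≠ 0) (hqr : ∀ m : ℕ, 0 < m → q ^ m ≠ 1)
    (hc : c ≠ 0) : ∃ r : ℂ, r ≠ 0 ∧ spinPair n hq c (rhoOdd n q c (-1)) =
      (0, r • bitUnit (fun _ => true) (fun _ => true)) := by
  obtain ⟨r, hr, e⟩ := spinRep_rhoOdd (n := n) hq hqr hc (η := -1) (by norm_num) (-1)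
  obtain ⟨r', -, e'⟩ := spinRep_rhoOdd (n := n) hq hqr hc (η := 1) (by norm_num) (-1)
  refine ⟨r * (-1 + -1), mul_ne_zero hr (by norm_num), Prod.ext (e'.trans ?_) e⟩
  rw [neg_add_cancel, mul_zero, zero_smul]

lemma spinPair_surjective {q c : ℂ} (hq : q ≠ 0) (hqr : ∀ m : ℕ, 0 < m → q ^ m ≠ 1)
    (hc : c ≠ 0) : Function.Surjective (spinPair n hq c) := by
  rintro ⟨T, T'⟩
  obtain ⟨r, hr, e⟩ := exists_spinPair_rhoOdd (n := n) hq hqr hc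
  obtain ⟨r', hr', e'⟩ := exists_spinPair_rhoOdd_neg (n := n) hq hqr hc
  obtain ⟨z, hz, ez⟩ := exists_mem_span_spinRep_eq hq hqr hc _ hr (congrArg Prod.fst e) T
  obtain ⟨z', hz', ez'⟩ := exists_mem_span_spinRep_eq hq hqr hc _ hr' (congrArg Prod.snd e') T'
  have h : spinRep n hq c (η := -1) neg_one_sq z = 0 :=
    eq_zero_of_mem_span_singleton (M := BitEnd n) _ (congrArg Prod.snd e) hz
  have h' : spinRep n hq c (η := 1) (one_pow 2) z' = 0 :=
    eq_zero_of_mem_span_singleton (M := BitEnd n) _ (congrArg Prod.fst e') hz'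
  refine ⟨z + z', ?_⟩
  rw [map_add]
  refine Prod.ext ?_ ?_
  · exact (congrArg₂ (· + ·) ez h').trans (add_zero T)
  · exact (congrArg₂ (· + ·) h ez').trans (zero_add T')

lemma spinPair_bijective {q c : ℂ} (hq : q ≠ 0) (hqr : ∀ m : ℕ, 0 < m → q ^ m ≠ 1)
    (hc : c ≠ 0) : Function.Bijective (spinPair n hq c) := by
  have hsurj := spinPair_surjective (n := n) hq hqr hc
  have := finite_cl n hq c
  have hdim : Module.finrank ℂ (Cl (2 * n + 1) q c) =
      Module.finrank ℂ (BitEnd n × BitEnd n) := by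
    refine le_antisymm ?_ (LinearMap.finrank_le_finrank_of_surjective
      (f := (spinPair n hq c).toLinearMap) hsurj)
    rw [Module.finrank_prod, finrank_bitEnd, ← mul_two]
    exact finrank_cl_le n hq c
  have hinj : Function.Injective (spinPair n hq c).toLinearMap :=
    (LinearMap.injective_iff_surjective_of_finrank_eq_finrank (K := ℂ)
      (V := Cl (2 * n + 1) q c) (V₂ := BitEnd n × BitEnd n)
      hdim (f := (spinPair n hq c).toLinearMap)).mpr hsurj
  exact ⟨hinj, hsurj⟩

end Splitting

/-- `Cl_{2n+1}(q,c)` is semisimple, and is the direct sum of the two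
simple two-sided ideals `I_±` generated by `ρ_±`, each of dimension `2^{2n}`. -/
theorem odd_clifford_semisimple (n : ℕ) (hn : 1 ≤ n) (q c : ℂ)
    (hq : q ≠ 0) (hqr : ∀ m : ℕ, 0 < m → q ^ m ≠ 1)
    (hcR : (c ^ 2).im = 0) (hc : c ≠ 0) :
    IsSemisimpleRing (Cl (2 * n + 1) q c) ∧
    TwoSidedIdeal.span {rhoOdd n q c 1} ⊔ TwoSidedIdeal.span {rhoOdd n q c (-1)} = ⊤ ∧
    TwoSidedIdeal.span {rhoOdd n q c 1} ⊓ TwoSidedIdeal.span {rhoOdd n q c (-1)} = ⊥ ∧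
    (∀ J : TwoSidedIdeal (Cl (2 * n + 1) q c), J ≤ TwoSidedIdeal.span {rhoOdd n q c 1} →
      J = ⊥ ∨ J = TwoSidedIdeal.span {rhoOdd n q c 1}) ∧
    (∀ J : TwoSidedIdeal (Cl (2 * n + 1) q c), J ≤ TwoSidedIdeal.span {rhoOdd n q c (-1)} →
      J = ⊥ ∨ J = TwoSidedIdeal.span {rhoOdd n q c (-1)}) ∧
    Module.rank ℂ
      (Submodule.span ℂ ((TwoSidedIdeal.span {rhoOdd n q c 1} : TwoSidedIdeal _) :
        Set (Cl (2 * n + 1) q c))) = 2 ^ (2 * n) ∧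
    Module.rank ℂ
      (Submodule.span ℂ ((TwoSidedIdeal.span {rhoOdd n q c (-1)} : TwoSidedIdeal _) :
        Set (Cl (2 * n + 1) q c))) = 2 ^ (2 * n) := by
  obtain ⟨r, hr, e⟩ := exists_spinPair_rhoOdd (n := n) hq hqr hc
  obtain ⟨r', hr', e'⟩ := exists_spinPair_rhoOdd_neg (n := n) hq hqr hc
  let f := AlgEquiv.ofBijective (spinPair n hq c) (spinPair_bijective hq hqr hc)
  have h1 : (f (rhoOdd n q c 1)).1 ≠ 0 := by
    rw [AlgEquiv.ofBijective_apply, e]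
    exact smul_ne_zero hr (bitUnit_ne_zero _ _)
  have h2 : (f (rhoOdd n q c 1)).2 = 0 := by rw [AlgEquiv.ofBijective_apply, e]
  have h1' : (f (rhoOdd n q c (-1))).1 = 0 := by rw [AlgEquiv.ofBijective_apply, e']
  have h2' : (f (rhoOdd n q c (-1))).2 ≠ 0 := by
    rw [AlgEquiv.ofBijective_apply, e']
    exact smul_ne_zero hr' (bitUnit_ne_zero _ _)
  let f' := f.trans (prodSwap (BitEnd n) (BitEnd n))
  refine ⟨?_, ?_, ?_, fun J hJ => ?_, fun J hJ => ?_, ?_, ?_⟩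
  · exact RingEquiv.isSemisimpleRing (R := BitEnd n × BitEnd n) f.symm.toRingEquiv
  · exact span_sup_span_eq_top (M := BitEnd n) (M' := BitEnd n) f h1 h2 h1' h2'
  · exact span_inf_span_eq_bot (M := BitEnd n) (M' := BitEnd n) f h1 h2 h1' h2'
  · exact eq_bot_or_eq_span (M := BitEnd n) (M' := BitEnd n) f h1 h2 J hJ
  · exact eq_bot_or_eq_span (M := BitEnd n) (M' := BitEnd n) f' h2' h1' J hJ
  · exact (rank_span_span (M := BitEnd n) (M' := BitEnd n) f h1 h2).trans rank_bitEnd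
  · exact (rank_span_span (M := BitEnd n) (M' := BitEnd n) f' h2' h1').trans rank_bitEnd

end FRT
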